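/- arXiv:1710.09186 — 4 statements merged into one kernel-verified Lean document; each statement's English description precedes it below -/
import Mathlib

section
/- Let K be a field and let J ⊆ F be the two-sided ideal of the free algebra F generated by the eight cyclic derivatives of the potential w, namely b₂c₂ + b₃c₃, b₁c₁ − b₃c₃, c₁a₂, c₂a₁, c₃a₁ − c₃a₂, a₂b₁, a₁b₂, and a₁b₃ − a₂b₃. Then in the quotient algebra F/J the image of the product aᵢbⱼcⱼ is zero for every i ∈ {1,2} and every j ∈ {1,2,3}. (This is the key computation in the proof that the cohomology H*(𝒢_{p,q,r}) of the Ginzburg dg algebra is finite-dimensional in each fixed degree.) -/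
/-!
Modulo `J` the relations from `∂w/∂a₁` and `∂w/∂a₂` give `b₁c₁ = b₃c₃ = -b₂c₂`, so for fixed `i`
the three products `aᵢbⱼcⱼ` agree up to sign and it suffices that one of them vanishes.
For `i = 1` this is `j = 2`, because `a₁b₂ ∈ J`; for `i = 2` it is `j = 1`, because `a₂b₁ ∈ J`.
-/

/-- The eight noncommuting generators `a₁, a₂, b₁, b₂, b₃, c₁, c₂, c₃`. -/
inductive Gen8 : Type
  | a1 | a2 | b1 | b2 | b3 | c1 | c2 | c3

open Gen8

/-- The generators viewed inside the free algebra `F` over `K`. -/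
noncomputable def X (K : Type*) [Field K] (g : Gen8) : FreeAlgebra K Gen8 :=
  FreeAlgebra.ι K g

/-- The two-sided ideal `J ⊆ F` generated by the eight cyclic derivatives of the
potential `w = a₁b₂c₂ + a₂b₁c₁ + a₁b₃c₃ − a₂b₃c₃`. -/
noncomputable def J (K : Type*) [Field K] : TwoSidedIdeal (FreeAlgebra K Gen8) :=
  TwoSidedIdeal.span
    { X K b2 * X K c2 + X K b3 * X K c3,
      X K b1 * X K c1 - X K b3 * X K c3,
      X K c1 * X K a2,
      X K c2 * X K a1,
      X K c3 * X K a1 - X K c3 * X K a2,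
      X K a2 * X K b1,
      X K a1 * X K b2,
      X K a1 * X K b3 - X K a2 * X K b3 }

/-- In the quotient `F/J`, the image of every product `aᵢ bⱼ cⱼ`
(`i ∈ {1,2}`, `j ∈ {1,2,3}`) is zero; equivalently, `aᵢ bⱼ cⱼ ∈ J`. -/
theorem statement0 (K : Type*) [Field K]
    (a : Fin 2 → FreeAlgebra K Gen8) (b c : Fin 3 → FreeAlgebra K Gen8)
    (ha : a = ![X K a1, X K a2]) (hb : b = ![X K b1, X K b2, X K b3])
    (hc : c = ![X K c1, X K c2, X K c3]) :
    ∀ (i : Fin 2) (j : Fin 3), a i * b j * c j ∈ J K := by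
  have r1 : X K b2 * X K c2 + X K b3 * X K c3 ∈ J K :=
    TwoSidedIdeal.subset_span (by simp)
  have r2 : X K b1 * X K c1 - X K b3 * X K c3 ∈ J K :=
    TwoSidedIdeal.subset_span (by simp)
  have r6 : X K a2 * X K b1 ∈ J K := TwoSidedIdeal.subset_span (by simp)
  have r7 : X K a1 * X K b2 ∈ J K := TwoSidedIdeal.subset_span (by simp)
  have h12 : X K a1 * X K b2 * X K c2 ∈ J K := (J K).mul_mem_right _ _ r7
  have h13 : X K a1 * X K b3 * X K c3 ∈ J K := by
    convert (J K).sub_mem ((J K).mul_mem_left (X K a1) _ r1) h12 using 1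
    noncomm_ring
  have h11 : X K a1 * X K b1 * X K c1 ∈ J K := by
    convert (J K).add_mem ((J K).mul_mem_left (X K a1) _ r2) h13 using 1
    noncomm_ring
  have h21 : X K a2 * X K b1 * X K c1 ∈ J K := (J K).mul_mem_right _ _ r6
  have h23 : X K a2 * X K b3 * X K c3 ∈ J K := by
    convert (J K).sub_mem h21 ((J K).mul_mem_left (X K a2) _ r2) using 1
    noncomm_ring
  have h22 : X K a2 * X K b2 * X K c2 ∈ J K := by
    convert (J K).sub_mem ((J K).mul_mem_left (X K a2) _ r1) h23 using 1
    noncomm_ring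
  subst ha hb hc
  intro i j
  fin_cases i <;> fin_cases j <;> assumption
end

section
/- Let K be any field and p, q, r ≥ 2. The Jacobi algebra of the quiver with potential (Q_{p,q,r}, w_{p,q,r}) — that is, the quotient of the path algebra KQ_{p,q,r} by the two-sided ideal generated by the eight cyclic derivatives of w_{p,q,r} = a₁b₂c₂ + a₂b₁c₁ + a₁b₃c₃ − a₂b₃c₃ (namely b₂c₂ + b₃c₃, b₁c₁ − b₃c₃, c₁a₂, c₂a₁, c₃a₁ − c₃a₂, a₂b₁, a₁b₂, a₁b₃ − a₂b₃) — is a finite-dimensional K-vector space. (This is the degree-zero part of the statement that the cohomology H*(𝒢_{p,q,r}) of the Ginzburg dg algebra of (Q_{p,q,r}, w_{p,q,r}) is finite-dimensional in each fixed degree.) -/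
/-! The Jacobi algebra is spanned by paths, so it suffices that all sufficiently long paths vanish
in it. The arrows split into the eight *core* arrows `aᵢ, bᵢ, cᵢ` and the *tail* arrows
`xᵢ, yⱼ, z_k`.

* Core (`core_pow_four`): put `u = b₃c₃`. The relations `∂w/∂aᵢ` give `b₁c₁ = u` and
  `b₂c₂ = -u`. Then `a₁u = -a₁b₂c₂ = 0`, `a₂u = a₂b₁c₁ = 0`, `ua₁ = -b₂c₂a₁ = 0` and
  `ua₂ = b₁c₁a₂ = 0`. So every path of the shape `abc` or `bca` vanishes, and every path of four
  core arrows contains one of these.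
* Tail (`tail_pow`): a tail arrow raises by one the position of the vertex along its arm, so the
  length of a path of tail arrows is bounded.
* A tail arrow is never followed by a core arrow (`tail_mul_core`), so every path is a core path
  followed by a tail path.

The argument is carried out in the semiring of `K`-submodules of the algebra: with `E`, `X` the
spans of the trivial paths and of the arrows, `X ^ N = ⊥` for large `N`, and `∑_{n < N} E * X ^ n`
is a finitely generated subspace that contains `1` and is stable under right multiplication by all
generators. -/

/-- The vertices of the quiver `Q_{p,q,r}`. -/
inductive QV (p q r : ℕ) : Type where
  | A : QV p q r
  | B : QV p q r
  | P : Fin (p - 1) → QV p q r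
  | Q : Fin (q - 1) → QV p q r
  | R : Fin (r - 1) → QV p q r
  deriving DecidableEq, Fintype

/-- The arrows of the quiver `Q_{p,q,r}`. -/
inductive QArrow (p q r : ℕ) : QV p q r → QV p q r → Type where
  | a1 : QArrow p q r QV.A QV.B
  | a2 : QArrow p q r QV.A QV.B
  | b1 (h : 0 < p - 1) : QArrow p q r QV.B (QV.P ⟨0, h⟩)
  | b2 (h : 0 < q - 1) : QArrow p q r QV.B (QV.Q ⟨0, h⟩)
  | b3 (h : 0 < r - 1) : QArrow p q r QV.B (QV.R ⟨0, h⟩)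
  | c1 (h : 0 < p - 1) : QArrow p q r (QV.P ⟨0, h⟩) QV.A
  | c2 (h : 0 < q - 1) : QArrow p q r (QV.Q ⟨0, h⟩) QV.A
  | c3 (h : 0 < r - 1) : QArrow p q r (QV.R ⟨0, h⟩) QV.A
  | x (i : ℕ) (h : i + 1 < p - 1) :
      QArrow p q r (QV.P ⟨i, Nat.lt_of_succ_lt h⟩) (QV.P ⟨i + 1, h⟩)
  | y (j : ℕ) (h : j + 1 < q - 1) :
      QArrow p q r (QV.Q ⟨j, Nat.lt_of_succ_lt h⟩) (QV.Q ⟨j + 1, h⟩)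
  | z (k : ℕ) (h : k + 1 < r - 1) :
      QArrow p q r (QV.R ⟨k, Nat.lt_of_succ_lt h⟩) (QV.R ⟨k + 1, h⟩)

/-- Generators of the free algebra presenting the path algebra `K Q_{p,q,r}`:
one generator `e_v` for each vertex and one for each arrow. -/
inductive QGen (p q r : ℕ) : Type where
  | vert : QV p q r → QGen p q r
  | arr : {u v : QV p q r} → QArrow p q r u v → QGen p q r

/-- The trivial-path generator `e_v` in the free algebra. -/
noncomputable def Ev (K : Type*) [Field K] {p q r : ℕ} (v : QV p q r) :
    FreeAlgebra K (QGen p q r) :=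
  FreeAlgebra.ι K (QGen.vert v)

/-- The arrow generator in the free algebra. -/
noncomputable def Av (K : Type*) [Field K] {p q r : ℕ} {u v : QV p q r}
    (α : QArrow p q r u v) : FreeAlgebra K (QGen p q r) :=
  FreeAlgebra.ι K (QGen.arr α)

/-- The relations presenting the Jacobi algebra of `(Q_{p,q,r}, w_{p,q,r})`:
the path-algebra relations `e_v e_w = δ_{vw} e_v`, `Σ_v e_v = 1`,
`e_{s(α)} α e_{t(α)} = α` (paths written left to right), together with the
eight cyclic derivatives of the potential
`w = a₁b₂c₂ + a₂b₁c₁ + a₁b₃c₃ − a₂b₃c₃`. -/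
inductive Jrel (K : Type*) [Field K] (p q r : ℕ) :
    FreeAlgebra K (QGen p q r) → FreeAlgebra K (QGen p q r) → Prop where
  | idem (v : QV p q r) : Jrel K p q r (Ev K v * Ev K v) (Ev K v)
  | orth (v w : QV p q r) (h : v ≠ w) : Jrel K p q r (Ev K v * Ev K w) 0
  | total : Jrel K p q r (∑ v : QV p q r, Ev K v) 1
  | comp {u v : QV p q r} (α : QArrow p q r u v) :
      Jrel K p q r (Ev K u * Av K α * Ev K v) (Av K α)
  | da1 (hq' : 0 < q - 1) (hr' : 0 < r - 1) :
      Jrel K p q r (Av K (QArrow.b2 hq') * Av K (QArrow.c2 hq')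
        + Av K (QArrow.b3 hr') * Av K (QArrow.c3 hr')) 0
  | da2 (hp' : 0 < p - 1) (hr' : 0 < r - 1) :
      Jrel K p q r (Av K (QArrow.b1 hp') * Av K (QArrow.c1 hp')
        - Av K (QArrow.b3 hr') * Av K (QArrow.c3 hr')) 0
  | db1 (hp' : 0 < p - 1) :
      Jrel K p q r (Av K (QArrow.c1 hp') * Av K QArrow.a2) 0
  | db2 (hq' : 0 < q - 1) :
      Jrel K p q r (Av K (QArrow.c2 hq') * Av K QArrow.a1) 0
  | db3 (hr' : 0 < r - 1) :
      Jrel K p q r (Av K (QArrow.c3 hr') * Av K QArrow.a1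
        - Av K (QArrow.c3 hr') * Av K QArrow.a2) 0
  | dc1 (hp' : 0 < p - 1) :
      Jrel K p q r (Av K QArrow.a2 * Av K (QArrow.b1 hp')) 0
  | dc2 (hq' : 0 < q - 1) :
      Jrel K p q r (Av K QArrow.a1 * Av K (QArrow.b2 hq')) 0
  | dc3 (hr' : 0 < r - 1) :
      Jrel K p q r (Av K QArrow.a1 * Av K (QArrow.b3 hr')
        - Av K QArrow.a2 * Av K (QArrow.b3 hr')) 0

/-- The Jacobi algebra of the quiver with potential `(Q_{p,q,r}, w_{p,q,r})`:
the quotient of the path algebra `K Q_{p,q,r}` (presented as a quotient of a free algebra)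
by the two-sided ideal generated by the eight cyclic derivatives of `w_{p,q,r}`. -/
noncomputable abbrev JacobiAlgebra (K : Type*) [Field K] (p q r : ℕ) : Type _ :=
  RingQuot (Jrel K p q r)

namespace JacobiFinite

variable (K : Type*) [Field K] {p q r : ℕ}

/-- The image of the trivial path `e_v` in the Jacobi algebra. -/
noncomputable def e (v : QV p q r) : JacobiAlgebra K p q r :=
  RingQuot.mkAlgHom K (Jrel K p q r) (Ev K v)

/-- The image of an arrow in the Jacobi algebra. -/
noncomputable def ar {u v : QV p q r} (α : QArrow p q r u v) : JacobiAlgebra K p q r :=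
  RingQuot.mkAlgHom K (Jrel K p q r) (Av K α)

lemma e_mul_self (v : QV p q r) : e K v * e K v = e K v := by
  simpa [e] using RingQuot.mkAlgHom_rel K (Jrel.idem (K := K) v)

lemma e_mul_ne {v w : QV p q r} (h : v ≠ w) : e K v * e K w = 0 := by
  simpa [e] using RingQuot.mkAlgHom_rel K (Jrel.orth (K := K) v w h)

lemma sum_e : ∑ v : QV p q r, e K v = 1 := by
  simpa [e] using RingQuot.mkAlgHom_rel K (Jrel.total (K := K) (p := p) (q := q) (r := r))

lemma e_ar_e {u v : QV p q r} (α : QArrow p q r u v) : e K u * ar K α * e K v = ar K α := by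
  simpa [e, ar] using RingQuot.mkAlgHom_rel K (Jrel.comp (K := K) α)

lemma e_mul_ar {u v : QV p q r} (α : QArrow p q r u v) : e K u * ar K α = ar K α := by
  rw [← e_ar_e, ← mul_assoc, ← mul_assoc, e_mul_self]

lemma ar_mul_e {u v : QV p q r} (α : QArrow p q r u v) : ar K α * e K v = ar K α := by
  rw [← e_ar_e, mul_assoc, e_mul_self]

lemma ar_mul_e_ne {u v w : QV p q r} (α : QArrow p q r u v) (h : v ≠ w) :
    ar K α * e K w = 0 := by
  rw [← ar_mul_e, mul_assoc, e_mul_ne K h, mul_zero]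

lemma ar_mul_ar_ne {u v u' v' : QV p q r} (α : QArrow p q r u v) (β : QArrow p q r u' v')
    (h : v ≠ u') : ar K α * ar K β = 0 := by
  rw [← e_mul_ar K β, ← mul_assoc, ar_mul_e_ne K α h, zero_mul]

/-! ### Spans of arrows -/

variable (p q r)

/-- The span of the arrows `A → B`. -/
noncomputable def SA : Submodule K (JacobiAlgebra K p q r) :=
  Submodule.span K {ar K QArrow.a1, ar K QArrow.a2}

/-- The span of the arrows out of `B`. -/
noncomputable def SB (hp : 0 < p - 1) (hq : 0 < q - 1) (hr : 0 < r - 1) :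
    Submodule K (JacobiAlgebra K p q r) :=
  Submodule.span K {ar K (QArrow.b1 hp), ar K (QArrow.b2 hq), ar K (QArrow.b3 hr)}

/-- The span of the arrows into `A`. -/
noncomputable def SC (hp : 0 < p - 1) (hq : 0 < q - 1) (hr : 0 < r - 1) :
    Submodule K (JacobiAlgebra K p q r) :=
  Submodule.span K {ar K (QArrow.c1 hp), ar K (QArrow.c2 hq), ar K (QArrow.c3 hr)}

/-- The span of the core arrows `aᵢ`, `bᵢ`, `cᵢ`. -/
noncomputable def core (hp : 0 < p - 1) (hq : 0 < q - 1) (hr : 0 < r - 1) :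
    Submodule K (JacobiAlgebra K p q r) :=
  SA K p q r + SB K p q r hp hq hr + SC K p q r hp hq hr

/-- The set of the tail arrows `xᵢ`, `yⱼ`, `z_k`. -/
def tailSet : Set (JacobiAlgebra K p q r) :=
  Set.range (fun i : {i // i + 1 < p - 1} => ar K (QArrow.x i.1 i.2)) ∪
  Set.range (fun i : {i // i + 1 < q - 1} => ar K (QArrow.y i.1 i.2)) ∪
  Set.range (fun i : {i // i + 1 < r - 1} => ar K (QArrow.z i.1 i.2))

/-- The span of the tail arrows. -/
noncomputable def tail : Submodule K (JacobiAlgebra K p q r) :=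
  Submodule.span K (tailSet K p q r)

/-- The span of the trivial paths. -/
noncomputable def SE : Submodule K (JacobiAlgebra K p q r) :=
  Submodule.span K (Set.range (e K))

lemma tailSet_finite : (tailSet K p q r).Finite := by
  have h (n : ℕ) : Finite {i // i + 1 < n - 1} :=
    ((Set.finite_lt_nat n).subset fun i (hi : i + 1 < n - 1) =>
      (by omega : i < n)).to_subtype
  have := h p
  have := h q
  have := h r
  exact ((Set.finite_range _).union (Set.finite_range _)).union (Set.finite_range _)

variable {p q r}

/-- The position of a vertex along its arm; `A`, `B` and the first vertex of each arm have
position `0`. -/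
def lev : QV p q r → ℕ
  | .A => 0
  | .B => 0
  | .P i => i
  | .Q i => i
  | .R i => i

lemma lev_lt (v : QV p q r) : lev v < p + q + r + 1 := by
  cases v <;> simp only [lev] <;> omega

lemma exists_of_mem_tailSet {a : JacobiAlgebra K p q r} (ha : a ∈ tailSet K p q r) :
    ∃ (u v : QV p q r) (α : QArrow p q r u v), lev v = lev u + 1 ∧ a = ar K α := by
  rcases ha with (⟨i, rfl⟩ | ⟨i, rfl⟩) | ⟨i, rfl⟩
  · exact ⟨_, _, QArrow.x i.1 i.2, rfl, rfl⟩
  · exact ⟨_, _, QArrow.y i.1 i.2, rfl, rfl⟩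
  · exact ⟨_, _, QArrow.z i.1 i.2, rfl, rfl⟩

lemma mul_eq_bot_of_span {R S : Type*} [CommSemiring R] [Semiring S] [Algebra R S] {s t : Set S}
    (h : ∀ a ∈ s, ∀ b ∈ t, a * b = 0) :
    Submodule.span R s * Submodule.span R t = 0 := by
  rw [Submodule.span_mul_span]
  refine Submodule.span_eq_bot.2 ?_
  rintro _ ⟨a, ha, b, hb, rfl⟩
  exact h a ha b hb

/-! ### Tail paths -/

/-- The span of the elements ending at a vertex of position at least `n`. -/
noncomputable def W (p q r n : ℕ) : Submodule K (JacobiAlgebra K p q r) :=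
  Submodule.span K {a | ∃ v : QV p q r, n ≤ lev v ∧ a * e K v = a}

lemma W_mul_tail (n : ℕ) : W K p q r n * tail K p q r ≤ W K p q r (n + 1) := by
  rw [W, tail, Submodule.span_mul_span, Submodule.span_le]
  rintro _ ⟨a, ⟨v, hv, hav⟩, t, ht, rfl⟩
  obtain ⟨u, w, α, hα, rfl⟩ := exists_of_mem_tailSet K ht
  by_cases h : v = u
  · subst h
    refine Submodule.subset_span ⟨w, by omega, ?_⟩
    simp only [mul_assoc, ar_mul_e]
  · have h0 : a * ar K α = 0 := by
      rw [← hav, ← e_mul_ar K α, mul_assoc, ← mul_assoc (e K v), e_mul_ne K h]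
      simp
    simp [h0]

lemma one_le_W : 1 ≤ W K p q r 0 := by
  rw [Submodule.one_le, ← sum_e K]
  exact Submodule.sum_mem _ fun v _ =>
    Submodule.subset_span ⟨v, Nat.zero_le _, e_mul_self K v⟩

lemma tail_pow_le (n : ℕ) : tail K p q r ^ n ≤ W K p q r n := by
  induction n with
  | zero => simpa using one_le_W K
  | succ n ih =>
    rw [pow_succ]
    exact (mul_le_mul_left ih _).trans (W_mul_tail K n)

lemma tail_pow : tail K p q r ^ (p + q + r + 1) = 0 := by
  refine le_bot_iff.1 ((tail_pow_le K _).trans ?_)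
  rw [W, Submodule.span_le]
  rintro a ⟨v, hv, -⟩
  exact absurd (lev_lt v) (by omega)

/-! ### Core paths -/

section core

variable (hp : 0 < p - 1) (hq : 0 < q - 1) (hr : 0 < r - 1)

lemma b1_c1 : ar K (QArrow.b1 (q := q) hp) * ar K (QArrow.c1 hp) =
    ar K (QArrow.b3 hr) * ar K (QArrow.c3 hr) := by
  have h := RingQuot.mkAlgHom_rel K (Jrel.da2 (K := K) (q := q) hp hr)
  rw [map_sub, map_mul, map_mul, map_zero] at h
  exact sub_eq_zero.1 h

lemma b2_c2 : ar K (QArrow.b2 (p := p) hq) * ar K (QArrow.c2 hq) =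
    -(ar K (QArrow.b3 hr) * ar K (QArrow.c3 hr)) := by
  have h := RingQuot.mkAlgHom_rel K (Jrel.da1 (K := K) (p := p) hq hr)
  rw [map_add, map_mul, map_mul, map_zero] at h
  exact eq_neg_of_add_eq_zero_left h

lemma c1_a2 : ar K (QArrow.c1 (q := q) (r := r) hp) * ar K QArrow.a2 = 0 := by
  simpa [ar] using RingQuot.mkAlgHom_rel K (Jrel.db1 (K := K) (q := q) (r := r) hp)

lemma c2_a1 : ar K (QArrow.c2 (p := p) (r := r) hq) * ar K QArrow.a1 = 0 := by
  simpa [ar] using RingQuot.mkAlgHom_rel K (Jrel.db2 (K := K) (p := p) (r := r) hq)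

lemma a2_b1 : ar K QArrow.a2 * ar K (QArrow.b1 (q := q) (r := r) hp) = 0 := by
  simpa [ar] using RingQuot.mkAlgHom_rel K (Jrel.dc1 (K := K) (q := q) (r := r) hp)

lemma a1_b2 : ar K QArrow.a1 * ar K (QArrow.b2 (p := p) (r := r) hq) = 0 := by
  simpa [ar] using RingQuot.mkAlgHom_rel K (Jrel.dc2 (K := K) (p := p) (r := r) hq)

/-- All paths `bᵢcⱼ` are multiples of `u = b₃c₃`. -/
lemma SB_mul_SC : SB K p q r hp hq hr * SC K p q r hp hq hr ≤
    Submodule.span K {ar K (QArrow.b3 hr) * ar K (QArrow.c3 hr)} := by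
  have hu := Submodule.mem_span_singleton_self (R := K)
    (ar K (QArrow.b3 (p := p) (q := q) hr) * ar K (QArrow.c3 hr))
  rw [SB, SC, Submodule.span_mul_span, Submodule.span_le]
  rintro _ ⟨b, (rfl | rfl | rfl), c, (rfl | rfl | rfl), rfl⟩
  · simpa only [b1_c1 K hp hr, SetLike.mem_coe] using hu
  · simp [ar_mul_ar_ne]
  · simp [ar_mul_ar_ne]
  · simp [ar_mul_ar_ne]
  · simpa only [b2_c2 K hq hr, SetLike.mem_coe] using Submodule.neg_mem _ hu
  · simp [ar_mul_ar_ne]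
  · simp [ar_mul_ar_ne]
  · simp [ar_mul_ar_ne]
  · exact hu

lemma SA_SB_SC : SA K p q r * (SB K p q r hp hq hr * SC K p q r hp hq hr) = 0 := by
  refine le_bot_iff.1 ((mul_le_mul_right (SB_mul_SC K hp hq hr) _).trans (le_of_eq ?_))
  refine mul_eq_bot_of_span ?_
  rintro _ (rfl | rfl) _ rfl
  · rw [← neg_neg (ar K (QArrow.b3 hr) * _), ← b2_c2 K hq hr, mul_neg, ← mul_assoc, a1_b2]
    simp
  · rw [← b1_c1 K hp hr, ← mul_assoc, a2_b1, zero_mul]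

lemma SB_SC_SA : SB K p q r hp hq hr * (SC K p q r hp hq hr * SA K p q r) = 0 := by
  rw [← mul_assoc]
  refine le_bot_iff.1 ((mul_le_mul_left (SB_mul_SC K hp hq hr) _).trans (le_of_eq ?_))
  refine mul_eq_bot_of_span ?_
  rintro _ rfl _ (rfl | rfl)
  · rw [← neg_neg (ar K (QArrow.b3 hr) * _), ← b2_c2 K hq hr, neg_mul, mul_assoc, c2_a1]
    simp
  · rw [← b1_c1 K hp hr, mul_assoc, c1_a2, mul_zero]

lemma core_pow_four : core K p q r hp hq hr ^ 4 = 0 := by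
  have hAA : SA K p q r * SA K p q r = 0 := by
    refine mul_eq_bot_of_span ?_
    rintro _ (rfl | rfl) _ (rfl | rfl) <;> simp [ar_mul_ar_ne]
  have hAC : SA K p q r * SC K p q r hp hq hr = 0 := by
    refine mul_eq_bot_of_span ?_
    rintro _ (rfl | rfl) _ (rfl | rfl | rfl) <;> simp [ar_mul_ar_ne]
  have hBB : SB K p q r hp hq hr * SB K p q r hp hq hr = 0 := by
    refine mul_eq_bot_of_span ?_
    rintro _ (rfl | rfl | rfl) _ (rfl | rfl | rfl) <;> simp [ar_mul_ar_ne]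
  have hBA : SB K p q r hp hq hr * SA K p q r = 0 := by
    refine mul_eq_bot_of_span ?_
    rintro _ (rfl | rfl | rfl) _ (rfl | rfl) <;> simp [ar_mul_ar_ne]
  have hCC : SC K p q r hp hq hr * SC K p q r hp hq hr = 0 := by
    refine mul_eq_bot_of_span ?_
    rintro _ (rfl | rfl | rfl) _ (rfl | rfl | rfl) <;> simp [ar_mul_ar_ne]
  have hCB : SC K p q r hp hq hr * SB K p q r hp hq hr = 0 := by
    refine mul_eq_bot_of_span ?_
    rintro _ (rfl | rfl | rfl) _ (rfl | rfl | rfl) <;> simp [ar_mul_ar_ne]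
  have hABC := SA_SB_SC K hp hq hr
  have hBCA := SB_SC_SA K hp hq hr
  rw [core]
  generalize SA K p q r = X at *
  generalize SB K p q r hp hq hr = Y at *
  generalize SC K p q r hp hq hr = Z at *
  have h2 : (X + Y + Z) * (X + Y + Z) = X * Y + Y * Z + Z * X := by
    simp only [mul_add, add_mul, hAA, hAC, hBB, hBA, hCC, hCB, zero_add, add_zero]
    abel
  -- Each product of two of the three remaining shapes contains `YX`, `YY`, `ZY`, `ZZ`, `XX`, `XZ`,
  -- `XYZ` or `YZX`.
  have z1 (M) : Y * (X * M) = 0 := by rw [← mul_assoc, hBA, zero_mul]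
  have z2 (M) : Y * (Y * M) = 0 := by rw [← mul_assoc, hBB, zero_mul]
  have z3 (M) : Z * (Y * M) = 0 := by rw [← mul_assoc, hCB, zero_mul]
  have z4 (M) : Z * (Z * M) = 0 := by rw [← mul_assoc, hCC, zero_mul]
  have z5 (M) : X * (X * M) = 0 := by rw [← mul_assoc, hAA, zero_mul]
  have z6 (M) : X * (Z * M) = 0 := by rw [← mul_assoc, hAC, zero_mul]
  have z7 : X * (Y * (Z * X)) = 0 := by rw [hBCA, mul_zero]
  have z8 : Y * (Z * (X * Y)) = 0 := by
    rw [← mul_assoc Z, ← mul_assoc Y, hBCA, zero_mul]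
  rw [show 4 = 2 + 2 from rfl, pow_add, pow_two, h2]
  simp only [mul_add, add_mul, mul_assoc, z1, z2, z3, z4, z5, z6, z7, z8, hABC, mul_zero, add_zero]

lemma tail_mul_core : tail K p q r * core K p q r hp hq hr = 0 := by
  have key {u v u' v' : QV p q r} (α : QArrow p q r u v) (β : QArrow p q r u' v')
      (h : lev v = lev u + 1) (h' : lev u' = 0) : ar K α * ar K β = 0 := by
    refine ar_mul_ar_ne K α β ?_
    rintro rfl
    omega
  rw [core, mul_add, mul_add]
  have hA : tail K p q r * SA K p q r = 0 := by
    refine mul_eq_bot_of_span fun t ht => ?_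
    obtain ⟨u, w, α, hα, rfl⟩ := exists_of_mem_tailSet K ht
    rintro _ (rfl | rfl) <;> exact key _ _ hα rfl
  have hB : tail K p q r * SB K p q r hp hq hr = 0 := by
    refine mul_eq_bot_of_span fun t ht => ?_
    obtain ⟨u, w, α, hα, rfl⟩ := exists_of_mem_tailSet K ht
    rintro _ (rfl | rfl | rfl) <;> exact key _ _ hα rfl
  have hC : tail K p q r * SC K p q r hp hq hr = 0 := by
    refine mul_eq_bot_of_span fun t ht => ?_
    obtain ⟨u, w, α, hα, rfl⟩ := exists_of_mem_tailSet K ht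
    rintro _ (rfl | rfl | rfl) <;> exact key _ _ hα rfl
  rw [hA, hB, hC, add_zero, add_zero]

/-! ### Finite-dimensionality -/

/-- The span of all arrows. -/
noncomputable def SX : Submodule K (JacobiAlgebra K p q r) :=
  core K p q r hp hq hr + tail K p q r

lemma ar_mem_SX {u v : QV p q r} (α : QArrow p q r u v) : ar K α ∈ SX K hp hq hr := by
  have hA : SA K p q r ≤ SX K hp hq hr := le_sup_left.trans (le_sup_left.trans le_sup_left)
  have hB : SB K p q r hp hq hr ≤ SX K hp hq hr :=
    le_sup_right.trans (le_sup_left.trans le_sup_left)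
  have hC : SC K p q r hp hq hr ≤ SX K hp hq hr := le_sup_right.trans le_sup_left
  have hT : tail K p q r ≤ SX K hp hq hr := le_sup_right
  cases α with
  | a1 => exact hA (Submodule.subset_span (by simp))
  | a2 => exact hA (Submodule.subset_span (by simp))
  | b1 => exact hB (Submodule.subset_span (by simp))
  | b2 => exact hB (Submodule.subset_span (by simp))
  | b3 => exact hB (Submodule.subset_span (by simp))
  | c1 => exact hC (Submodule.subset_span (by simp))
  | c2 => exact hC (Submodule.subset_span (by simp))
  | c3 => exact hC (Submodule.subset_span (by simp))
  | x i h => exact hT (Submodule.subset_span (Or.inl (Or.inl ⟨⟨i, h⟩, rfl⟩)))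
  | y i h => exact hT (Submodule.subset_span (Or.inl (Or.inr ⟨⟨i, h⟩, rfl⟩)))
  | z i h => exact hT (Submodule.subset_span (Or.inr ⟨⟨i, h⟩, rfl⟩))

lemma SX_fg : (SX K hp hq hr).FG := by
  refine Submodule.FG.sup (Submodule.FG.sup (Submodule.FG.sup ?_ ?_) ?_) ?_
  · exact Submodule.fg_span (Set.toFinite _)
  · exact Submodule.fg_span (Set.toFinite _)
  · exact Submodule.fg_span (Set.toFinite _)
  · exact Submodule.fg_span (tailSet_finite K p q r)

lemma exists_SX_pow : ∃ N, SX K hp hq hr ^ N = 0 := by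
  have hTC := tail_mul_core K hp hq hr
  have hT := tail_pow K (p := p) (q := q) (r := r)
  have hC := core_pow_four K hp hq hr
  rw [SX]
  generalize core K p q r hp hq hr = C at *
  generalize tail K p q r = T at *
  generalize p + q + r + 1 = M at *
  have hTX (n : ℕ) : T * (C + T) ^ n = T ^ (n + 1) := by
    induction n with
    | zero => simp
    | succ n ih => rw [pow_succ, ← mul_assoc, ih, mul_add, pow_succ T n, mul_assoc, hTC, mul_zero,
        zero_add, pow_succ T (n + 1), pow_succ T n]
  -- In a nonzero path of length more than `M` the first arrow is a core arrow.
  have hstep (n : ℕ) : (C + T) ^ (M + n + 1) = C * (C + T) ^ (M + n) := by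
    rw [pow_succ', add_mul, hTX, add_assoc, pow_add T, hT, zero_mul, add_zero]
  refine ⟨M + 3 + 1, ?_⟩
  rw [hstep, ← add_assoc M 2 1, hstep, ← add_assoc M 1 1, hstep, ← add_zero (M), hstep,
    ← mul_assoc, ← mul_assoc, ← mul_assoc]
  rw [show C * C * C * C = C ^ 4 by simp only [pow_succ, pow_zero, one_mul], hC, zero_mul]

lemma SE_mul_SE : SE K p q r * SE K p q r ≤ SE K p q r := by
  rw [SE, Submodule.span_mul_span, Submodule.span_le]
  rintro _ ⟨_, ⟨v, rfl⟩, _, ⟨w, rfl⟩, rfl⟩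
  by_cases h : v = w
  · subst h
    exact Submodule.subset_span ⟨v, (e_mul_self K v).symm⟩
  · simp [e_mul_ne K h]

lemma span_mul_SE {s : Set (JacobiAlgebra K p q r)}
    (h : ∀ a ∈ s, ∃ (u v : QV p q r) (α : QArrow p q r u v), a = ar K α) :
    Submodule.span K s * SE K p q r ≤ Submodule.span K s := by
  rw [SE, Submodule.span_mul_span, Submodule.span_le]
  rintro _ ⟨a, ha, _, ⟨w, rfl⟩, rfl⟩
  obtain ⟨u, v, α, rfl⟩ := h a ha
  by_cases h : v = w
  · subst h
    simpa only [ar_mul_e] using Submodule.subset_span ha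
  · simp [ar_mul_e_ne K α h]

lemma SX_mul_SE : SX K hp hq hr * SE K p q r ≤ SX K hp hq hr := by
  rw [SX, core, add_mul, add_mul, add_mul]
  refine add_le_add (add_le_add (add_le_add ?_ ?_) ?_) ?_ <;> refine span_mul_SE K ?_
  · rintro _ (rfl | rfl) <;> exact ⟨_, _, _, rfl⟩
  · rintro _ (rfl | rfl | rfl) <;> exact ⟨_, _, _, rfl⟩
  · rintro _ (rfl | rfl | rfl) <;> exact ⟨_, _, _, rfl⟩
  · intro a ha
    obtain ⟨u, v, α, -, rfl⟩ := exists_of_mem_tailSet K ha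
    exact ⟨_, _, _, rfl⟩

end core

lemma finite_jacobi (hp : 0 < p - 1) (hq : 0 < q - 1) (hr : 0 < r - 1) :
    Module.Finite K (JacobiAlgebra K p q r) := by
  obtain ⟨N, hN⟩ := exists_SX_pow K hp hq hr
  have hXfg := SX_fg K hp hq hr
  have hXE := SX_mul_SE K hp hq hr
  have hX {u v : QV p q r} (α : QArrow p q r u v) := ar_mem_SX K hp hq hr α
  have hEE := SE_mul_SE K (p := p) (q := q) (r := r)
  have hEfg : (SE K p q r).FG := Submodule.fg_span (Set.finite_range _)
  have hEe (v : QV p q r) : e K v ∈ SE K p q r := Submodule.subset_span ⟨v, rfl⟩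
  have h1 : (1 : JacobiAlgebra K p q r) ∈ SE K p q r := by
    rw [← sum_e K]
    exact Submodule.sum_mem _ fun v _ => hEe v
  generalize SX K hp hq hr = X at *
  generalize SE K p q r = E at *
  set F : Submodule K (JacobiAlgebra K p q r) := ⨆ n ∈ Finset.range (N + 1), E * X ^ n with hF
  have hle {n : ℕ} (hn : n ∈ Finset.range (N + 1)) : E * X ^ n ≤ F :=
    le_iSup₂ (f := fun n (_ : n ∈ Finset.range (N + 1)) => E * X ^ n) n hn
  have hFfg : F.FG := Submodule.fg_biSup _ _ fun n _ => hEfg.mul (hXfg.pow n)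
  have hFE : F * E ≤ F := by
    conv_lhs => rw [hF]
    simp only [Submodule.iSup_mul]
    refine iSup₂_le fun n hn => le_trans ?_ (hle hn)
    cases n with
    | zero => simpa using hEE
    | succ n =>
      rw [pow_succ, mul_assoc, mul_assoc]
      exact mul_le_mul_right (mul_le_mul_right hXE _) _
  have hFX : F * X ≤ F := by
    conv_lhs => rw [hF]
    simp only [Submodule.iSup_mul]
    refine iSup₂_le fun n hn => ?_
    rw [mul_assoc, ← pow_succ]
    by_cases h : n = N
    · rw [h, pow_succ, hN, zero_mul, mul_zero]
      exact bot_le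
    · exact hle (by simp only [Finset.mem_range] at hn ⊢; omega)
  have hstab (f : FreeAlgebra K (QGen p q r)) :
      ∀ a ∈ F, a * RingQuot.mkAlgHom K (Jrel K p q r) f ∈ F := by
    induction f using FreeAlgebra.induction with
    | grade0 c =>
      intro a ha
      rw [AlgHom.commutes, ← Algebra.commutes, ← Algebra.smul_def]
      exact F.smul_mem c ha
    | grade1 g =>
      intro a ha
      cases g with
      | vert v => exact hFE (Submodule.mul_mem_mul ha (hEe v))
      | arr α => exact hFX (Submodule.mul_mem_mul ha (hX α))
    | mul f g hf hg =>
      intro a ha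
      rw [map_mul, ← mul_assoc]
      exact hg _ (hf a ha)
    | add f g hf hg =>
      intro a ha
      rw [map_add, mul_add]
      exact F.add_mem (hf a ha) (hg a ha)
  have h1F : (1 : JacobiAlgebra K p q r) ∈ F := by
    refine hle (n := 0) (by simp) ?_
    simpa using h1
  refine ⟨?_⟩
  have htop : F = ⊤ := by
    refine eq_top_iff.2 fun a _ => ?_
    obtain ⟨f, rfl⟩ := RingQuot.mkAlgHom_surjective K (Jrel K p q r) a
    simpa using hstab f 1 h1F
  exact htop ▸ hFfg

end JacobiFinite

/-- For any field `K` and `p, q, r ≥ 2`, the Jacobi algebra of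
`(Q_{p,q,r}, w_{p,q,r})` is a finite-dimensional `K`-vector space. -/
theorem statement3 (K : Type*) [Field K] (p q r : ℕ)
    (hp : 2 ≤ p) (hq : 2 ≤ q) (hr : 2 ≤ r) :
    FiniteDimensional K (JacobiAlgebra K p q r) := by
  exact JacobiFinite.finite_jacobi K (by omega) (by omega) (by omega)
end

section
/- If A is a one-way algebra over a field K, then the center of A is one-dimensional and equals K·1_A; that is, every element of A that commutes with all elements of A is a scalar multiple of the identity. (This is the claim Z(𝒜) ≅ K used in the proof that the n-cyclic completion of a one-way algebra satisfies Δ_cyc((1/n)·eu) = 1.) -/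
/-!
Write a central element as `z = ∑ cᵢ eᵢ`: since `eᵢAeᵢ` is the line `K·eᵢ`, `z * eᵢ = cᵢ eᵢ` for a
scalar `cᵢ`. Centrality of `z` gives `(cᵢ - cⱼ) eᵢxeⱼ = 0`, so `eᵢAeⱼ = 0` whenever `cᵢ ≠ cⱼ`. Hence,
for a fixed index `k`, the sum of those `eᵢ` with `cᵢ = cₖ` is a central idempotent. It is nonzero
because it fixes `eₖ`, so indecomposability makes it `1`, and then `z = cₖ · 1`.
-/

/-- If `A` is a one-way algebra over a field `K` (a finite-dimensional unital `K`-algebra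
with a complete set `e₁, …, e_r` of orthogonal idempotents, `r > 1`, such that
`eᵢAeⱼ ≠ 0 → eⱼAeᵢ = 0` for `i ≠ j`, `dim_K eᵢAeᵢ = 1` for all `i`, and `A` is
indecomposable, i.e. its only central idempotents are `0` and `1`), then the center of `A`
equals `K·1_A` — every element commuting with all of `A` is a scalar multiple of the
identity — and is one-dimensional. -/
theorem statement4 {K A : Type*} [Field K] [Ring A] [Algebra K A]
    [FiniteDimensional K A]
    (r : ℕ) (hr : 1 < r) (e : Fin r → A)
    (hidem : ∀ i, e i * e i = e i)
    (horth : ∀ i j, i ≠ j → e i * e j = 0)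
    (hsum : ∑ i, e i = 1)
    (honeway : ∀ i j, i ≠ j → (∃ x : A, e i * x * e j ≠ 0) → ∀ x : A, e j * x * e i = 0)
    (hdim : ∀ i, Module.finrank K
      (LinearMap.range ((LinearMap.mulLeft K (e i)).comp (LinearMap.mulRight K (e i)))) = 1)
    (hindec : ∀ z : A, (∀ x : A, z * x = x * z) → z * z = z → z = 0 ∨ z = 1) :
    (∀ z : A, (∀ x : A, z * x = x * z) → ∃ c : K, z = algebraMap K A c) ∧
    Module.finrank K (Subalgebra.center K A) = 1 := by
  have hne : ∀ i, e i ≠ 0 := by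
    intro i h
    have h1 := hdim i
    have h0 : (LinearMap.mulLeft K (e i)).comp (LinearMap.mulRight K (e i)) = 0 := by
      ext x
      simp [h]
    rw [h0, LinearMap.range_zero, finrank_bot] at h1
    exact absurd h1 (by decide)
  have : Nontrivial A := ⟨⟨e ⟨0, by omega⟩, 0, hne _⟩⟩
  have hscal : ∀ z : A, (∀ x : A, z * x = x * z) → ∃ c : K, z = algebraMap K A c := by
    intro z hz
    have hc : ∀ i, ∃ c : K, z * e i = c • e i := by
      intro i
      let V := LinearMap.range ((LinearMap.mulLeft K (e i)).comp (LinearMap.mulRight K (e i)))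
      let v : V := ⟨e i, 1, by simp [hidem]⟩
      let w : V := ⟨z * e i, z, by
        simp only [LinearMap.comp_apply, LinearMap.mulLeft_apply, LinearMap.mulRight_apply]
        rw [← mul_assoc, ← hz, mul_assoc, hidem]⟩
      have hv : v ≠ 0 := fun h => hne i (congrArg Subtype.val h)
      obtain ⟨c, hcw⟩ := (finrank_eq_one_iff_of_nonzero' v hv).1 (hdim i) w
      exact ⟨c, (congrArg Subtype.val hcw).symm⟩
    choose c hc using hc
    have hzero : ∀ i j, c i ≠ c j → ∀ x, e i * x * e j = 0 := by
      intro i j hij x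
      have h1 : c i • (e i * x * e j) = c j • (e i * x * e j) := by
        calc c i • (e i * x * e j) = (z * e i) * x * e j := by rw [hc]; simp
          _ = e i * x * (z * e j) := by
            rw [hz (e i)]
            simp only [mul_assoc]
            rw [← mul_assoc z, hz x, mul_assoc]
          _ = c j • (e i * x * e j) := by rw [hc]; simp
      rw [← sub_eq_zero, ← sub_smul] at h1
      exact (smul_eq_zero.1 h1).resolve_left (sub_ne_zero.2 hij)
    classical
    let k : Fin r := ⟨0, by omega⟩
    -- `∑ dᵢ eᵢ` is the sum of the `eᵢ` with `cᵢ = cₖ`.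
    let d : Fin r → K := fun i => if c i = c k then 1 else 0
    have hpe : ∀ j, (∑ i, d i • e i) * e j = d j • e j := by
      intro j
      rw [Finset.sum_mul, Finset.sum_eq_single j]
      · simp [hidem]
      · intro i _ hij
        simp [horth i j hij]
      · simp
    have hcent : ∀ x, (∑ i, d i • e i) * x = x * ∑ i, d i • e i := by
      intro x
      calc (∑ i, d i • e i) * x = (∑ i, d i • e i) * x * ∑ j, e j := by rw [hsum, mul_one]
        _ = (∑ i, e i) * x * ∑ j, d j • e j := by
          simp only [Finset.sum_mul, Finset.mul_sum]
          refine Finset.sum_congr rfl fun j _ => Finset.sum_congr rfl fun i _ => ?_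
          simp only [smul_mul_assoc, mul_smul_comm]
          by_cases h : c i = c j
          · simp [d, h]
          · simp [hzero i j h x]
        _ = x * ∑ i, d i • e i := by rw [hsum, one_mul]
    have hid : (∑ i, d i • e i) * (∑ i, d i • e i) = ∑ i, d i • e i := by
      conv_lhs => rw [Finset.mul_sum]
      refine Finset.sum_congr rfl fun j _ => ?_
      rw [mul_smul_comm, hpe, smul_smul]
      by_cases hj : c j = c k <;> simp [d, hj]
    have hk : (∑ i, d i • e i) * e k = e k := by rw [hpe]; simp [d]
    rcases hindec _ hcent hid with h | h
    · rw [h, zero_mul] at hk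
      exact absurd hk.symm (hne k)
    · refine ⟨c k, ?_⟩
      calc z = z * ∑ i, d i • e i := by rw [h, mul_one]
        _ = c k • ∑ i, d i • e i := by
          rw [Finset.mul_sum, Finset.smul_sum]
          refine Finset.sum_congr rfl fun i _ => ?_
          rw [mul_smul_comm, hc]
          by_cases hi : c i = c k <;> simp [d, hi]
        _ = algebraMap K A (c k) := by rw [h, Algebra.algebraMap_eq_smul_one]
  refine ⟨hscal, ?_⟩
  have hbot : Subalgebra.center K A = ⊥ := by
    refine le_antisymm (fun z hz => ?_) bot_le
    obtain ⟨c, rfl⟩ := hscal z fun x => (Subalgebra.mem_center_iff.1 hz x).symm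
    exact Subalgebra.algebraMap_mem _ c
  rw [hbot]
  exact Subalgebra.finrank_bot
end

section
/- Let A be an associative unital algebra over a field K, B = A ⊕ A^∨ its trivial extension with pairing ⟨(a₁, f₁), (a₂, f₂)⟩ = f₁(a₂) + f₂(a₁), and let D : B → B be the K-linear map D(a, f) = (0, f) (which equals (1/n)·eu_B for the grading placing A in degree 0 and A^∨ in degree n). Then: (i) D is a derivation of B; (ii) ⟨1_B, b⟩ = ⟨D(b), 1_B⟩ for every b ∈ B; and (iii) 1_B is the unique element z ∈ B satisfying ⟨z, b⟩ = ⟨D(b), 1_B⟩ for all b ∈ B. (This is the identity Δ_cyc((1/n)·eu_B) = 1 underlying the Proposition that the n-cyclic completion of a one-way algebra admits a quasi-dilation.) -/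
/-!
`D` is the projection onto the summand `A^∨`, i.e. the Euler derivation of the grading with `A` in
degree `0` and `A^∨` in degree `1`, so parts (i) and (ii) follow by expanding both sides; both
sides of (ii) are `f(1)` for `b = (a, f)`. Part (iii) is nondegeneracy of the pairing, which for
arbitrary (possibly infinite-dimensional) `A` rests on the fact that the linear functionals on a
vector space separate its points (`Module.forall_dual_apply_eq_zero_iff`).
-/

variable (K A : Type*) [Field K] [Ring A] [Algebra K A]

/-- The multiplication of the trivial (square-zero) extension `B = A ⊕ A^∨`,
where `A^∨ = Hom_K(A, K)` carries the bimodule structure `(x·f·y)(a) = f(y a x)`: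
`(a₁, f₁)(a₂, f₂) = (a₁a₂, a₁·f₂ + f₁·a₂)`. -/
noncomputable def bmul (x y : A × Module.Dual K A) : A × Module.Dual K A :=
  (x.1 * y.1, y.2.comp (LinearMap.mulRight K x.1) + x.2.comp (LinearMap.mulLeft K y.1))

/-- The unit `1_B = (1_A, 0)` of the trivial extension. -/
noncomputable def bone : A × Module.Dual K A := (1, 0)

/-- The pairing `⟨(a₁, f₁), (a₂, f₂)⟩ = f₁(a₂) + f₂(a₁)` on the trivial extension. -/
noncomputable def bpair (x y : A × Module.Dual K A) : K :=
  x.2 y.1 + y.2 x.1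

/-- The `K`-linear map `D(a, f) = (0, f)` on the trivial extension `B = A ⊕ A^∨`
(which is `(1/n)·eu_B` for the grading placing `A` in degree `0` and `A^∨` in degree `n`). -/
noncomputable def D : A × Module.Dual K A →ₗ[K] A × Module.Dual K A :=
  LinearMap.prod 0 (LinearMap.snd K A (Module.Dual K A))

/-- For the trivial extension `B = A ⊕ A^∨` with pairing
`⟨(a₁, f₁), (a₂, f₂)⟩ = f₁(a₂) + f₂(a₁)` and the `K`-linear map `D(a, f) = (0, f)`:
(i) `D` is a derivation of `B`; (ii) `⟨1_B, b⟩ = ⟨D(b), 1_B⟩` for every `b ∈ B`; and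
(iii) `1_B` is the unique element `z` with `⟨z, b⟩ = ⟨D(b), 1_B⟩` for all `b ∈ B`.
(This is the identity `Δ_cyc((1/n)·eu_B) = 1`.) -/
theorem statement8 :
    (∀ x y : A × Module.Dual K A,
      D K A (bmul K A x y) = bmul K A (D K A x) y + bmul K A x (D K A y)) ∧
    (∀ b : A × Module.Dual K A,
      bpair K A (bone K A) b = bpair K A (D K A b) (bone K A)) ∧
    (∀ z : A × Module.Dual K A,
      (∀ b, bpair K A z b = bpair K A (D K A b) (bone K A)) → z = bone K A) := by
  refine ⟨fun x y => ?_, fun b => ?_, fun z hz => ?_⟩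
  · ext a
    · simp [D, bmul]
    · simp [D, bmul, add_comm]
  · simp [D, bpair, bone]
  -- The pairing with `b = (0, f)` determines `z.1`, the one with `b = (a, 0)` determines `z.2`.
  · refine Prod.ext ?_ (LinearMap.ext fun a => ?_)
    · refine (Module.forall_dual_apply_eq_zero_iff K _).1 ?_ |> sub_eq_zero.1
      intro f
      have h := hz (0, f)
      simp only [D, bpair, bone] at h ⊢
      simpa [sub_eq_zero] using h
    · simpa [D, bpair, bone] using hz (a, 0)
end
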